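/- Every smooth plane cubic over ℂ is projectively equivalent to a cubic in Hesse form: if g is a homogeneous cubic polynomial in three variables over ℂ whose partial derivatives have no common nonzero zero, then there exist an invertible matrix A ∈ GL₃(ℂ), a nonzero scalar c ∈ ℂˣ, and k ∈ ℂ with k³ ≠ 1, such that substituting the linear change of variables given by A into g yields c·(x³ + y³ + z³ − 3k·xyz). -/

import Mathlib

open MvPolynomial

/-- The Hesse cubic form `x³ + y³ + z³ − 3k·xyz`. -/
noncomputable def hesseCubic (k : ℂ) : MvPolynomial (Fin 3) ℂ :=
  X 0 ^ 3 + X 1 ^ 3 + X 2 ^ 3 - C (3 * k) * (X 0 * X 1 * X 2)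


theorem aux_pderiv_comm (i j : Fin 3) (g : MvPolynomial (Fin 3) ℂ) :
    pderiv i (pderiv j g) = pderiv j (pderiv i g) := by
  have h : ⁅(pderiv i : Derivation ℂ (MvPolynomial (Fin 3) ℂ) (MvPolynomial (Fin 3) ℂ)), (pderiv j : Derivation ℂ (MvPolynomial (Fin 3) ℂ) (MvPolynomial (Fin 3) ℂ))⁆ = 0 := by
    apply MvPolynomial.derivation_ext
    intro k
    rw [Derivation.commutator_apply]
    simp only [pderiv_X, Pi.single_apply]
    split_ifs <;> simp
  have := congrArg (fun D => D g) h
  simp only [Derivation.commutator_apply, Derivation.coe_zero, Pi.zero_apply] at this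
  exact sub_eq_zero.mp this

theorem aux_common_zero (f h : MvPolynomial (Fin 3) ℂ)
    (hf : eval 0 f = 0) (hh : eval 0 h = 0) :
    ∃ p : Fin 3 → ℂ, p ≠ 0 ∧ eval p f = 0 ∧ eval p h = 0 := by
  by_contra hcon
  push Not at hcon
  classical
  let R := MvPolynomial (Fin 3) ℂ
  let P1 : Ideal R := RingHom.ker (aeval ![0, X 1, X 2] : R →ₐ[ℂ] R)
  let P2 : Ideal R := RingHom.ker (aeval ![0, 0, X 2] : R →ₐ[ℂ] R)
  let P3 : Ideal R := RingHom.ker (aeval ![0, 0, 0] : R →ₐ[ℂ] R)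
  have hp1 : P1.IsPrime := RingHom.ker_isPrime _
  have hp2 : P2.IsPrime := RingHom.ker_isPrime _
  have hp3 : P3.IsPrime := RingHom.ker_isPrime _
  have h01 : (⊥ : Ideal R) < P1 := by
    rw [bot_lt_iff_ne_bot]
    intro h0
    have : (X 0 : R) ∈ P1 := by simp [P1, RingHom.mem_ker]
    rw [h0] at this
    exact X_ne_zero (R := ℂ) (0 : Fin 3) this
  have h12 : P1 < P2 := by
    refine lt_of_le_of_ne ?_ ?_
    · intro x hx
      have hc : (aeval ![0, 0, X 2] : R →ₐ[ℂ] R) =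
          (aeval ![0, 0, X 2] : R →ₐ[ℂ] R).comp (aeval ![0, X 1, X 2] : R →ₐ[ℂ] R) := by
        apply MvPolynomial.algHom_ext
        intro i; fin_cases i <;> simp
      have hx' : (aeval ![0, X 1, X 2] : R →ₐ[ℂ] R) x = 0 := hx
      change (aeval ![0, 0, X 2] : R →ₐ[ℂ] R) x = 0
      rw [hc, AlgHom.comp_apply, hx', map_zero]
    · intro h0
      have : (X 1 : R) ∈ P2 := by simp [P2, RingHom.mem_ker]
      rw [← h0] at this
      simp [P1, RingHom.mem_ker] at this
      exact X_ne_zero (R := ℂ) (1 : Fin 3) this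
  have h23 : P2 < P3 := by
    refine lt_of_le_of_ne ?_ ?_
    · intro x hx
      have hc : (aeval ![0, 0, 0] : R →ₐ[ℂ] R) =
          (aeval ![0, 0, 0] : R →ₐ[ℂ] R).comp (aeval ![0, 0, X 2] : R →ₐ[ℂ] R) := by
        apply MvPolynomial.algHom_ext
        intro i; fin_cases i <;> simp
      have hx' : (aeval ![0, 0, X 2] : R →ₐ[ℂ] R) x = 0 := hx
      change (aeval ![0, 0, 0] : R →ₐ[ℂ] R) x = 0
      rw [hc, AlgHom.comp_apply, hx', map_zero]
    · intro h0
      have : (X 2 : R) ∈ P3 := by simp [P3, RingHom.mem_ker]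
      rw [← h0] at this
      simp [P2, RingHom.mem_ker] at this
      exact X_ne_zero (R := ℂ) (2 : Fin 3) this
  have e1 := Ideal.height_add_one_le_of_lt_of_isPrime h01
  have e2 := Ideal.height_add_one_le_of_lt_of_isPrime h12
  have e3 := Ideal.height_add_one_le_of_lt_of_isPrime h23
  have hP3 : P3 = vanishingIdeal ℂ ({0} : Set (Fin 3 → ℂ)) := by
    ext x
    rw [mem_vanishingIdeal_singleton_iff]
    have hc : (aeval ![0, 0, 0] : R →ₐ[ℂ] R) =
        (Algebra.ofId ℂ R).comp (aeval (0 : Fin 3 → ℂ)) := by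
      apply MvPolynomial.algHom_ext
      intro i; fin_cases i <;> simp
    change (aeval ![0, 0, 0] : R →ₐ[ℂ] R) x = 0 ↔ _
    rw [hc, AlgHom.comp_apply, Algebra.ofId_apply, MvPolynomial.algebraMap_eq]
    exact C_eq_zero
  let I : Ideal R := Ideal.span {f, h}
  have hz : zeroLocus ℂ I = {0} := by
    rw [zeroLocus_span]
    ext p
    simp only [Set.mem_insert_iff, Set.mem_singleton_iff, forall_eq_or_imp, forall_eq,
      Set.mem_ofPred_eq, aeval_eq_eval]
    constructor
    · rintro ⟨h1, h2⟩
      by_contra h0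
      exact hcon p h0 h1 h2
    · rintro rfl
      exact ⟨hf, hh⟩
  have hrad : I.radical = P3 := by
    rw [hP3, ← hz, vanishingIdeal_zeroLocus_eq_radical]
  have hmin : P3 ∈ I.minimalPrimes := by
    rw [← Ideal.radical_minimalPrimes, hrad, Ideal.minimalPrimes_eq_subsingleton_self]
    rfl
  have hle := Ideal.height_le_card_of_mem_minimalPrimes_span (Set.toFinite _) hmin
  have hc : ({f, h} : Set R).ncard ≤ 2 := Set.ncard_insert_le _ _ |>.trans (by simp)
  have h3 : (3 : ℕ∞) ≤ P3.height := by
    calc (3 : ℕ∞) = 0 + 1 + 1 + 1 := by norm_num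
      _ ≤ (⊥ : Ideal R).height + 1 + 1 + 1 := by gcongr; exact zero_le
      _ ≤ P1.height + 1 + 1 := by gcongr
      _ ≤ P2.height + 1 := by gcongr
      _ ≤ _ := e3
  have : (3 : ℕ∞) ≤ 2 := h3.trans (hle.trans (by exact_mod_cast hc))
  exact absurd this (by decide)

def auxSm (F : (Fin 3 → ℂ) → ℂ) : Prop :=
  ∀ v, (∀ w, F (v + w) - F (v - w) = 2 * F w) → v = 0

def auxHes (F : (Fin 3 → ℂ) → ℂ) : Prop :=
  ∃ (A : Matrix (Fin 3) (Fin 3) ℂ) (c k : ℂ), A.det ≠ 0 ∧ c ≠ 0 ∧ k ^ 3 ≠ 1 ∧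
    ∀ v, F (A.mulVec v) = c * (v 0 ^ 3 + v 1 ^ 3 + v 2 ^ 3 - 3 * k * (v 0 * v 1 * v 2))

theorem auxSm_trans {F G : (Fin 3 → ℂ) → ℂ} (hF : auxSm F) (A : Matrix (Fin 3) (Fin 3) ℂ)
    (hA : A.det ≠ 0) (hG : ∀ v, F (A.mulVec v) = G v) : auxSm G := by
  intro v hv
  have hu : IsUnit A.det := isUnit_iff_ne_zero.mpr hA
  have h0 : A.mulVec v = 0 := by
    apply hF
    intro w
    have h := hv (A⁻¹.mulVec w)
    rw [← hG, ← hG, ← hG, Matrix.mulVec_add, Matrix.mulVec_sub, Matrix.mulVec_mulVec,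
      Matrix.mul_nonsing_inv _ hu, Matrix.one_mulVec] at h
    exact h
  exact Matrix.eq_zero_of_mulVec_eq_zero hA h0

theorem auxHes_trans {F G : (Fin 3 → ℂ) → ℂ} (A : Matrix (Fin 3) (Fin 3) ℂ)
    (hA : A.det ≠ 0) (hG : ∀ v, F (A.mulVec v) = G v) (h : auxHes G) : auxHes F := by
  obtain ⟨B, c, k, hB, hc, hk, hv⟩ := h
  refine ⟨A * B, c, k, by simp [hA, hB], hc, hk, fun v => ?_⟩
  rw [← hv, ← hG, Matrix.mulVec_mulVec]

theorem aux_sqrt (a : ℂ) : ∃ z : ℂ, z ^ 2 = a := IsAlgClosed.exists_pow_nat_eq a (by norm_num)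

/-- diagonal stage -/
theorem aux_step6 (a b : ℂ) (hb : b ≠ 0) (F : (Fin 3 → ℂ) → ℂ)
    (hF : ∀ v, F v = a * v 0 ^ 3 + b * (v 1 ^ 3 + v 2 ^ 3 - 3 * (v 0 * v 1 * v 2)))
    (hs : auxSm F) : auxHes F := by
  have ha : a ≠ 0 := by
    rintro rfl
    have h := hs ![1, 0, 0] (by intro w; simp [hF, Matrix.vecHead, Matrix.vecTail]; ring)
    have := congrFun h 0
    simp at this
  obtain ⟨s, hs3⟩ : ∃ z : ℂ, z ^ 3 = b / a := IsAlgClosed.exists_pow_nat_eq _ (by norm_num)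
  have hs0 : s ≠ 0 := by
    rintro rfl
    have : b / a ≠ 0 := div_ne_zero hb ha
    exact this (by rw [← hs3]; norm_num)
  have has : a * s ^ 3 = b := by rw [hs3]; field_simp
  have hdet : (!![s, 0, 0; 0, 1, 0; 0, 0, 1] : Matrix (Fin 3) (Fin 3) ℂ).det ≠ 0 := by
    simp [Matrix.det_fin_three, hs0]
  have hG : ∀ v : Fin 3 → ℂ,
      F ((!![s, 0, 0; 0, 1, 0; 0, 0, 1] : Matrix (Fin 3) (Fin 3) ℂ).mulVec v) =
      b * (v 0 ^ 3 + v 1 ^ 3 + v 2 ^ 3 - 3 * s * (v 0 * v 1 * v 2)) := by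
    intro v
    simp [hF, Matrix.mulVec, dotProduct, Fin.sum_univ_three]
    linear_combination (v 0 ^ 3) * has
  refine ⟨_, b, s, hdet, hb, ?_, hG⟩
  intro hk
  have h := auxSm_trans hs _ hdet hG ![1, 1, s ^ 2] (by
    intro w
    simp
    linear_combination (b * (2 * s * w 2 * 3 - 6 * w 0 - 6 * w 1)) * hk)
  have := congrFun h 0
  simp at this

/-- from `(P+Q+R)^3 - κ PQR` -/
theorem aux_step5 (c d : ℂ) (hd : d ≠ 0) (F : (Fin 3 → ℂ) → ℂ)
    (hF : ∀ v, F v = c * (v 0 + v 1 + v 2) ^ 3 + d * (v 0 * v 1 * v 2))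
    (hs : auxSm F) : auxHes F := by
  obtain ⟨t, ht⟩ := aux_sqrt (-3)
  have ht0 : t ≠ 0 := by rintro rfl; norm_num at ht
  obtain ⟨w, hw⟩ : ∃ w : ℂ, w = (-1 + t) / 2 := ⟨_, rfl⟩
  have hw2 : w ^ 2 + w + 1 = 0 := by rw [hw]; linear_combination ht / 4
  have htw : t = 2 * w + 1 := by rw [hw]; ring
  have hdet : (!![1, 1, 1; 1, w, w ^ 2; 1, w ^ 2, w] : Matrix (Fin 3) (Fin 3) ℂ).det ≠ 0 := by
    have : (!![1, 1, 1; 1, w, w ^ 2; 1, w ^ 2, w] : Matrix (Fin 3) (Fin 3) ℂ).det = - 3 * t := by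
      simp [Matrix.det_fin_three]
      rw [htw]
      linear_combination (-w ^ 2 + w + 3) * hw2
    rw [this]
    exact mul_ne_zero (by norm_num) ht0
  have hG : ∀ v : Fin 3 → ℂ,
      F ((!![1, 1, 1; 1, w, w ^ 2; 1, w ^ 2, w] : Matrix (Fin 3) (Fin 3) ℂ).mulVec v) =
      (27 * c + d) * v 0 ^ 3 + d * (v 1 ^ 3 + v 2 ^ 3 - 3 * (v 0 * v 1 * v 2)) := by
    intro v
    have e : w ^ 2 = -w - 1 := by linear_combination hw2
    simp only [hF, Matrix.mulVec, dotProduct, Fin.sum_univ_three]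
    simp
    rw [e]
    generalize v 0 = x
    generalize v 1 = y
    generalize v 2 = z
    have e1 : x + y + z + (x + w * y + (-w - 1) * z) + (x + (-w - 1) * y + w * z) = 3 * x := by ring
    rw [e1]
    have e2 : (x + w * y + (-w - 1) * z) * (x + (-w - 1) * y + w * z) =
      x ^ 2 + y ^ 2 + z ^ 2 - x * y - y * z - x * z := by
      linear_combination (-y ^ 2 - z ^ 2 + 2 * y * z) * hw2
    linear_combination d * (x + y + z) * e2
  exact auxHes_trans _ hdet hG (aux_step6 _ d hd _ (fun _ => rfl) (auxSm_trans hs _ hdet hG))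

theorem aux_quartic (a b : ℂ) (h : ¬ (a = 0 ∧ b = 0)) :
    ∃ x : ℂ, x ≠ 0 ∧ 3 * x ^ 4 + 6 * a * x ^ 2 + 12 * b * x - a ^ 2 = 0 := by
  by_cases ha : a = 0
  · subst ha
    have hb : b ≠ 0 := fun hb => h ⟨rfl, hb⟩
    obtain ⟨x, hx⟩ : ∃ z : ℂ, z ^ 3 = -4 * b := IsAlgClosed.exists_pow_nat_eq _ (by norm_num)
    refine ⟨x, ?_, by linear_combination 3 * x * hx⟩
    rintro rfl
    apply hb
    linear_combination hx / 4
  · let p : Polynomial ℂ := Polynomial.C 3 * Polynomial.X ^ 4 +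
      (Polynomial.C (6 * a) * Polynomial.X ^ 2 + Polynomial.C (12 * b) * Polynomial.X +
        Polynomial.C (- a ^ 2))
    have hp : p.degree = 4 := by
      simp only [p]
      compute_degree
      · norm_num
      all_goals decide
    obtain ⟨x, hx⟩ := IsAlgClosed.exists_root p (by rw [hp]; decide)
    have hx' : 3 * x ^ 4 + 6 * a * x ^ 2 + 12 * b * x - a ^ 2 = 0 := by
      simp [p, Polynomial.IsRoot] at hx
      linear_combination hx
    refine ⟨x, ?_, hx'⟩
    rintro rfl
    apply ha
    have : a ^ 2 = 0 := by linear_combination -hx'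
    simpa using this

/-- Weierstrass stage -/
theorem aux_step4 (c a b : ℂ) (hc : c ≠ 0) (F : (Fin 3 → ℂ) → ℂ)
    (hF : ∀ v, F v = c * (v 0 ^ 3 + a * v 0 * v 2 ^ 2 + b * v 2 ^ 3 - v 1 ^ 2 * v 2))
    (hs : auxSm F) : auxHes F := by
  have hab : ¬ (a = 0 ∧ b = 0) := by
    rintro ⟨rfl, rfl⟩
    have h := hs ![0, 0, 1] (by intro w; simp [hF, Matrix.vecHead, Matrix.vecTail]; ring)
    have := congrFun h 2
    simp at this
  obtain ⟨x, hx0, hx⟩ := aux_quartic a b hab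
  obtain ⟨l, hl⟩ := aux_sqrt (3 * x)
  have hl0 : l ≠ 0 := by
    rintro rfl
    apply hx0
    linear_combination -hl / 3
  obtain ⟨n, hn⟩ : ∃ n : ℂ, n = (a - 3 * x ^ 2) / (2 * l) := ⟨_, rfl⟩
  have hn1 : 2 * l * n = a - 3 * x ^ 2 := by rw [hn]; field_simp
  have hn2 : n ^ 2 = b + x ^ 3 := by
    have : 4 * l ^ 2 * (n ^ 2 - (b + x ^ 3)) = 0 := by
      linear_combination (2 * l * n + (a - 3 * x ^ 2)) * hn1 - 4 * (b + x ^ 3) * hl - hx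
    have h4 : 4 * l ^ 2 ≠ 0 := mul_ne_zero (by norm_num) (pow_ne_zero _ hl0)
    exact sub_eq_zero.mp ((mul_eq_zero.mp this).resolve_left h4)
  obtain ⟨m, hm⟩ : ∃ m : ℂ, m = n + l * x := ⟨_, rfl⟩
  have hm0 : m ≠ 0 := by
    intro h0
    have hn' : n = - l * x := by linear_combination h0 - hm
    have ha' : a = - 3 * x ^ 2 := by
      rw [hn'] at hn1
      linear_combination -hn1 - 2 * x * hl
    have hb' : b = 2 * x ^ 3 := by
      rw [hn'] at hn2
      linear_combination - hn2 + x ^ 2 * hl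
    have h := hs ![x, 0, 1] (by intro w; simp [hF, ha', hb', Matrix.vecHead, Matrix.vecTail]; ring)
    have := congrFun h 2
    simp at this
  obtain ⟨r, hr⟩ : ∃ r : ℂ, r = l / m := ⟨_, rfl⟩
  have hr0 : r ≠ 0 := by rw [hr]; exact div_ne_zero hl0 hm0
  have hrm : r * m = l := by rw [hr]; field_simp
  have hdet : (!![1 - x * r, 1, 1; 0, -l, l; -r, 0, 0] : Matrix (Fin 3) (Fin 3) ℂ).det ≠ 0 := by
    have : (!![1 - x * r, 1, 1; 0, -l, l; -r, 0, 0] : Matrix (Fin 3) (Fin 3) ℂ).det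
      = -2 * (l * r) := by
      simp [Matrix.det_fin_three]
      ring
    rw [this]
    exact mul_ne_zero (by norm_num) (mul_ne_zero hl0 hr0)
  have key : ∀ X Y Z : ℂ, X ^ 3 + a * X * Z ^ 2 + b * Z ^ 3 - Y ^ 2 * Z =
      (X - x * Z) ^ 3 - Z * (Y - l * X - n * Z) * (Y + l * X + n * Z) := by
    intro X Y Z
    linear_combination (-X * Z ^ 2) * hn1 - Z ^ 3 * hn2 - X ^ 2 * Z * hl
  have hG : ∀ v : Fin 3 → ℂ,
      F ((!![1 - x * r, 1, 1; 0, -l, l; -r, 0, 0] : Matrix (Fin 3) (Fin 3) ℂ).mulVec v) =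
      c * (v 0 + v 1 + v 2) ^ 3 + (-4 * c * l ^ 2 * r) * (v 0 * v 1 * v 2) := by
    intro v
    simp only [hF, key]
    simp [Matrix.mulVec, dotProduct, Fin.sum_univ_three]
    generalize v 0 = p
    generalize v 1 = q
    generalize v 2 = s
    have e0 : (1 - x * r) * p + q + s + x * (r * p) = p + q + s := by ring
    have e1 : -(l * q) + l * s - l * ((1 - x * r) * p + q + s) + n * (r * p) = - 2 * l * q := by
      linear_combination p * hrm - p * r * hm
    have e2 : -(l * q) + l * s + l * ((1 - x * r) * p + q + s) + -(n * (r * p)) = 2 * l * s := by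
      linear_combination - p * hrm + p * r * hm
    rw [e0, e1, e2]
    ring
  refine auxHes_trans _ hdet hG (aux_step5 _ _ ?_ _ (fun _ => rfl) (auxSm_trans hs _ hdet hG))
  exact mul_ne_zero (mul_ne_zero (mul_ne_zero (by norm_num) hc) (pow_ne_zero _ hl0)) hr0

/-- after moving a flex to `(0,1,0)` -/
theorem aux_step3 (c b e f h i : ℂ) (hb : b ≠ 0) (F : (Fin 3 → ℂ) → ℂ)
    (hF : ∀ v, F v = c * v 0 ^ 3 + v 2 * (b * v 1 ^ 2 + e * v 1 * v 2 + f * v 0 ^ 2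
      + h * v 0 * v 2 + i * v 2 ^ 2))
    (hs : auxSm F) : auxHes F := by
  have hc : c ≠ 0 := by
    rintro rfl
    obtain ⟨y, hy⟩ := aux_sqrt (- f / b)
    have hy' : b * y ^ 2 + f = 0 := by rw [hy]; field_simp; ring
    have h := hs ![1, y, 0] (by
      intro w; simp [hF, Matrix.vecHead, Matrix.vecTail]; linear_combination (2 * w 2) * hy')
    have := congrFun h 0
    simp at this
  obtain ⟨s, hs2⟩ := aux_sqrt (- c / b)
  have hsb : b * s ^ 2 = - c := by rw [hs2]; field_simp
  have hs0 : s ≠ 0 := by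
    rintro rfl
    apply hc
    linear_combination hsb
  obtain ⟨α, hα⟩ : ∃ α : ℂ, α = - f / (3 * c) := ⟨_, rfl⟩
  have hα' : 3 * c * α = - f := by rw [hα]; field_simp
  obtain ⟨β, hβ⟩ : ∃ β : ℂ, β = - e / (2 * b) := ⟨_, rfl⟩
  have hβ' : 2 * b * β = - e := by rw [hβ]; field_simp
  obtain ⟨A, hA⟩ : ∃ A : ℂ, A = (3 * c * α ^ 2 + 2 * f * α + h) / c := ⟨_, rfl⟩
  have hA' : c * A = 3 * c * α ^ 2 + 2 * f * α + h := by rw [hA]; field_simp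
  obtain ⟨B, hB⟩ : ∃ B : ℂ, B = (c * α ^ 3 + b * β ^ 2 + e * β + f * α ^ 2 + h * α + i) / c :=
    ⟨_, rfl⟩
  have hB' : c * B = c * α ^ 3 + b * β ^ 2 + e * β + f * α ^ 2 + h * α + i := by
    rw [hB]; field_simp
  have hdet : (!![1, 0, α; 0, s, β; 0, 0, 1] : Matrix (Fin 3) (Fin 3) ℂ).det ≠ 0 := by
    simp [Matrix.det_fin_three, hs0]
  have hG : ∀ v : Fin 3 → ℂ,
      F ((!![1, 0, α; 0, s, β; 0, 0, 1] : Matrix (Fin 3) (Fin 3) ℂ).mulVec v) =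
      c * (v 0 ^ 3 + A * v 0 * v 2 ^ 2 + B * v 2 ^ 3 - v 1 ^ 2 * v 2) := by
    intro v
    simp only [hF]
    simp [Matrix.mulVec, dotProduct, Fin.sum_univ_three]
    generalize v 0 = x
    generalize v 1 = y
    generalize v 2 = z
    linear_combination y ^ 2 * z * hsb + x ^ 2 * z * hα' + s * y * z ^ 2 * hβ'
      - x * z ^ 2 * hA' - z ^ 3 * hB'
  exact auxHes_trans _ hdet hG (aux_step4 _ _ _ hc _ (fun _ => rfl) (auxSm_trans hs _ hdet hG))

def auxB (t : Fin 3 → Fin 3 → Fin 3 → ℂ) (u v w : Fin 3 → ℂ) : ℂ :=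
  ∑ i, ∑ j, ∑ k, t i j k * u i * v j * w k

theorem auxB_lin (t : Fin 3 → Fin 3 → Fin 3 → ℂ) (a b c : ℂ) (u p w x y : Fin 3 → ℂ) :
    auxB t (a • u + b • p + c • w) x y =
      a * auxB t u x y + b * auxB t p x y + c * auxB t w x y := by
  simp only [auxB, Finset.mul_sum, ← Finset.sum_add_distrib, Pi.add_apply, Pi.smul_apply,
    smul_eq_mul]
  refine Finset.sum_congr rfl fun i _ => Finset.sum_congr rfl fun j _ =>
    Finset.sum_congr rfl fun k _ => ?_
  ring

theorem auxB_zero (t : Fin 3 → Fin 3 → Fin 3 → ℂ) (x y : Fin 3 → ℂ) : auxB t 0 x y = 0 := by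
  simp [auxB]

theorem auxB_swap (t : Fin 3 → Fin 3 → Fin 3 → ℂ) (h : ∀ i j k, t i j k = t j i k)
    (u v w : Fin 3 → ℂ) : auxB t u v w = auxB t v u w := by
  unfold auxB
  rw [Finset.sum_comm]
  refine Finset.sum_congr rfl fun i _ => Finset.sum_congr rfl fun j _ =>
    Finset.sum_congr rfl fun k _ => ?_
  rw [h]; ring

theorem auxB_swap' (t : Fin 3 → Fin 3 → Fin 3 → ℂ) (h : ∀ i j k, t i j k = t i k j)
    (u v w : Fin 3 → ℂ) : auxB t u v w = auxB t u w v := by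
  unfold auxB
  refine Finset.sum_congr rfl fun i _ => ?_
  rw [Finset.sum_comm]
  refine Finset.sum_congr rfl fun j _ =>
    Finset.sum_congr rfl fun k _ => ?_
  rw [h]; ring

theorem auxB_cube (t : Fin 3 → Fin 3 → Fin 3 → ℂ) (h1 : ∀ i j k, t i j k = t j i k)
    (h2 : ∀ i j k, t i j k = t i k j) (a b c : ℂ) (u p w : Fin 3 → ℂ) :
    auxB t (a • u + b • p + c • w) (a • u + b • p + c • w) (a • u + b • p + c • w) =
      a ^ 3 * auxB t u u u + b ^ 3 * auxB t p p p + c ^ 3 * auxB t w w w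
      + 3 * a ^ 2 * b * auxB t p u u + 3 * a ^ 2 * c * auxB t w u u
      + 3 * a * b ^ 2 * auxB t p p u + 3 * b ^ 2 * c * auxB t p p w
      + 3 * a * c ^ 2 * auxB t w w u + 3 * b * c ^ 2 * auxB t w w p
      + 6 * a * b * c * auxB t p u w := by
  have s1 := auxB_swap t h1
  have s2 := auxB_swap' t h2
  have l1 := auxB_lin t a b c u p w
  have l2 : ∀ x y, auxB t x (a • u + b • p + c • w) y =
      a * auxB t x u y + b * auxB t x p y + c * auxB t x w y := by
    intro x y; rw [s1, l1, s1 u, s1 p, s1 w]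
  have l3 : ∀ x y, auxB t x y (a • u + b • p + c • w) =
      a * auxB t x y u + b * auxB t x y p + c * auxB t x y w := by
    intro x y; rw [s2, l2, s2 x u, s2 x p, s2 x w]
  rw [l1]
  simp only [l2]
  simp only [l3]
  rw [s1 u p u, s2 u u p, s1 u p u, s1 u p p, s2 p u p, s2 u u w, s1 u w u, s1 u w w, s2 w u w,
    s1 u p w, s2 u w p, s1 u p w, s1 w p u, s2 p w u, s2 w u p, s1 w p u, s2 p w u,
    s2 p w p, s1 w p p, s2 p w p, s1 p w w, s2 w p w]
  ring

theorem aux_step2 (t : Fin 3 → Fin 3 → Fin 3 → ℂ) (h1 : ∀ i j k, t i j k = t j i k)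
    (h2 : ∀ i j k, t i j k = t i k j) (F : (Fin 3 → ℂ) → ℂ)
    (hF : ∀ v, F v = auxB t v v v / 6) (hs : auxSm F) (p u w : Fin 3 → ℂ) (hu : u ≠ 0)
    (hpp : auxB t p p p = 0) (hpu : ∀ x, auxB t p u x = 0) (hw : auxB t p p w ≠ 0) :
    auxHes F := by
  have s1 := auxB_swap t h1
  have s2 := auxB_swap' t h2
  let M : Matrix (Fin 3) (Fin 3) ℂ := Matrix.of fun i => ![u i, p i, w i]
  have hM : ∀ v, M.mulVec v = v 0 • u + v 1 • p + v 2 • w := by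
    intro v
    ext i
    simp [M, Matrix.mulVec, dotProduct, Fin.sum_univ_three]
    ring
  have hdet : M.det ≠ 0 := by
    intro h0
    obtain ⟨v, hv0, hv⟩ := Matrix.exists_mulVec_eq_zero_iff.mpr h0
    rw [hM] at hv
    have e1 := auxB_lin t (v 0) (v 1) (v 2) u p w p p
    rw [hv, auxB_zero, hpp, s1 u p p, hpu, s1 w, s2 p w p] at e1
    have hv2 : v 2 = 0 := by
      have : v 2 * auxB t p p w = 0 := by linear_combination -e1
      exact (mul_eq_zero.mp this).resolve_right hw
    have e2 := auxB_lin t (v 0) (v 1) (v 2) u p w p w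
    rw [hv, auxB_zero, s1 u p w, hpu, hv2] at e2
    have hv1 : v 1 = 0 := by
      have : v 1 * auxB t p p w = 0 := by linear_combination -e2
      exact (mul_eq_zero.mp this).resolve_right hw
    rw [hv1, hv2] at hv
    have hv0' : v 0 = 0 := by
      have : v 0 • u = 0 := by simpa using hv
      exact (smul_eq_zero.mp this).resolve_right hu
    apply hv0
    ext i; fin_cases i <;> simp [hv0', hv1, hv2]
  have hG : ∀ v, F (M.mulVec v) = (auxB t u u u / 6) * v 0 ^ 3 + v 2 * ((auxB t p p w / 2) * v 1 ^ 2
      + (auxB t w w p / 2) * v 1 * v 2 + (auxB t w u u / 2) * v 0 ^ 2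
      + (auxB t w w u / 2) * v 0 * v 2 + (auxB t w w w / 6) * v 2 ^ 2) := by
    intro v
    rw [hF, hM, auxB_cube t h1 h2, hpp, hpu, hpu, s2 p p u, hpu]
    ring
  refine auxHes_trans _ hdet hG (aux_step3 _ _ _ _ _ _ ?_ _ (fun _ => rfl)
    (auxSm_trans hs _ hdet hG))
  exact div_ne_zero hw (by norm_num)

theorem aux_euler {n : ℕ} {f : MvPolynomial (Fin 3) ℂ} (hf : f.IsHomogeneous n) (v : Fin 3 → ℂ) :
    ∑ i, v i * eval v (pderiv i f) = n * eval v f := by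
  have := congrArg (eval v) hf.sum_X_mul_pderiv
  simpa using this

theorem aux_hom0 {f : MvPolynomial (Fin 3) ℂ} (hf : f.IsHomogeneous 0) (v : Fin 3 → ℂ) :
    eval v f = eval 0 f := by
  have h := totalDegree_eq_zero_iff_eq_C.mp (Nat.le_zero.mp hf.totalDegree_le)
  rw [h]; simp

theorem aux_main (g : MvPolynomial (Fin 3) ℂ) (hg : g.IsHomogeneous 3)
    (hsm : ∀ p : Fin 3 → ℂ, (∀ i : Fin 3, eval p (pderiv i g) = 0) → p = 0) :
    auxHes (fun v => eval v g) := by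
  let t : Fin 3 → Fin 3 → Fin 3 → ℂ := fun i j k => eval 0 (pderiv i (pderiv j (pderiv k g)))
  have h1 : ∀ i j k, t i j k = t j i k := fun i j k => by simp only [t]; rw [aux_pderiv_comm]
  have h2 : ∀ i j k, t i j k = t i k j := fun i j k => by
    simp only [t]; rw [aux_pderiv_comm j k]
  have s1 := auxB_swap t h1
  have s2 := auxB_swap' t h2
  have hd1 : ∀ i, (pderiv i g).IsHomogeneous 2 := fun i => hg.pderiv
  have hd2 : ∀ i j, (pderiv i (pderiv j g)).IsHomogeneous 1 := fun i j => (hd1 j).pderiv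
  have hd3 : ∀ i j k, (pderiv i (pderiv j (pderiv k g))).IsHomogeneous 0 :=
    fun i j k => (hd2 j k).pderiv
  have E3 : ∀ v j k, ∑ i, v i * t i j k = eval v (pderiv j (pderiv k g)) := by
    intro v j k
    have := aux_euler (hd2 j k) v
    simp only [aux_hom0 (hd3 _ _ _) v] at this
    rw [Nat.cast_one, one_mul] at this
    exact this
  have E2 : ∀ v k, ∑ j, v j * eval v (pderiv j (pderiv k g)) = 2 * eval v (pderiv k g) := by
    intro v k
    simpa using aux_euler (hd1 k) v
  have E1 : ∀ v, ∑ k, v k * eval v (pderiv k g) = 3 * eval v g := by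
    intro v
    simpa using aux_euler hg v
  have B1 : ∀ v x y, auxB t v x y = ∑ j, ∑ k, eval v (pderiv j (pderiv k g)) * x j * y k := by
    intro v x y
    simp only [← E3, Finset.sum_mul]
    unfold auxB
    rw [Finset.sum_comm]
    refine Finset.sum_congr rfl fun j _ => ?_
    rw [Finset.sum_comm]
    refine Finset.sum_congr rfl fun k _ => Finset.sum_congr rfl fun i _ => ?_
    ring
  have B2 : ∀ v x, auxB t v v x = 2 * ∑ k, eval v (pderiv k g) * x k := by
    intro v x
    rw [B1, Finset.sum_comm, Finset.mul_sum]
    refine Finset.sum_congr rfl fun k _ => ?_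
    rw [← mul_assoc, ← E2, Finset.sum_mul]
    refine Finset.sum_congr rfl fun j _ => ?_
    ring
  have B3 : ∀ v, auxB t v v v = 6 * eval v g := by
    intro v
    rw [B2]
    have := E1 v
    simp only [mul_comm (eval v _)]
    rw [this]; ring
  have hF : ∀ v, eval v g = auxB t v v v / 6 := by intro v; rw [B3]; ring
  have hs : auxSm (fun v => eval v g) := by
    intro v hv
    apply hsm
    intro i
    have h := hv (Pi.single i 1)
    simp only [hF] at h
    have e1 : v + Pi.single i 1 = (1 : ℂ) • v + (1 : ℂ) • (Pi.single i 1 : Fin 3 → ℂ)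
      + (0 : ℂ) • (0 : Fin 3 → ℂ) := by simp
    have e2 : v - Pi.single i 1 = (1 : ℂ) • v + (-1 : ℂ) • (Pi.single i 1 : Fin 3 → ℂ)
      + (0 : ℂ) • (0 : Fin 3 → ℂ) := by simp [sub_eq_add_neg]
    rw [e1, e2, auxB_cube t h1 h2, auxB_cube t h1 h2] at h
    have h3 : auxB t v v (Pi.single i 1) = 0 := by
      rw [s2, s1]
      linear_combination h
    rw [B2] at h3
    simpa [Pi.single_apply] using h3
  -- the Hessian
  let H : Matrix (Fin 3) (Fin 3) (MvPolynomial (Fin 3) ℂ) :=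
    Matrix.of fun i j => pderiv i (pderiv j g)
  have hH : ∀ v, eval v H.det = (Matrix.of fun i j => eval v (pderiv i (pderiv j g))).det := by
    intro v
    rw [RingHom.map_det]
    rfl
  have hH0 : eval 0 H.det = 0 := by
    rw [hH]
    have : (Matrix.of fun i j => eval (0 : Fin 3 → ℂ) (pderiv i (pderiv j g))) = 0 := by
      ext i j
      rw [Matrix.of_apply, ← E3]
      simp
    rw [this]
    exact Matrix.det_zero
  have hg0 : eval 0 g = 0 := by rw [hF]; simp [auxB_zero]
  obtain ⟨p, hp0, hpg, hpH⟩ := aux_common_zero g H.det hg0 hH0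
  rw [hH] at hpH
  obtain ⟨u, hu0, hu⟩ := Matrix.exists_mulVec_eq_zero_iff.mpr hpH
  have hpu : ∀ x, auxB t p u x = 0 := by
    intro x
    rw [s2, B1]
    apply Finset.sum_eq_zero
    intro i _
    have := congrFun hu i
    simp only [Matrix.mulVec, dotProduct, Matrix.of_apply, Pi.zero_apply] at this
    calc _ = x i * ∑ k, eval p (pderiv i (pderiv k g)) * u k := by
          rw [Finset.mul_sum]; refine Finset.sum_congr rfl fun k _ => ?_; ring
      _ = 0 := by rw [this, mul_zero]
  obtain ⟨i, hi⟩ : ∃ i, eval p (pderiv i g) ≠ 0 := by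
    by_contra hcon
    push Not at hcon
    exact hp0 (hsm p hcon)
  refine aux_step2 t h1 h2 _ hF hs p u (Pi.single i 1) hu0 (by rw [B3, hpg, mul_zero]) hpu ?_
  rw [B2]
  simpa [Pi.single_apply] using hi

/-- Every smooth plane cubic over `ℂ` is projectively equivalent to a cubic in Hesse
form: if `g` is a homogeneous cubic in three variables whose partial derivatives have no
common nonzero zero, then there are `A ∈ GL₃(ℂ)`, `c ∈ ℂˣ` and `k ∈ ℂ` with `k³ ≠ 1`
such that substituting the linear change of variables given by `A` into `g` yields
`c·(x³ + y³ + z³ − 3k·xyz)`. -/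
theorem smooth_plane_cubic_hesse_form (g : MvPolynomial (Fin 3) ℂ)
    (hg : g.IsHomogeneous 3)
    (hsm : ∀ p : Fin 3 → ℂ,
      (∀ i : Fin 3, MvPolynomial.eval p (MvPolynomial.pderiv i g) = 0) → p = 0) :
    ∃ (A : GL (Fin 3) ℂ) (c : ℂˣ) (k : ℂ), k ^ 3 ≠ 1 ∧
      MvPolynomial.aeval
        (fun i : Fin 3 => ∑ j : Fin 3, (A : Matrix (Fin 3) (Fin 3) ℂ) i j • X j) g =
      (c : ℂ) • hesseCubic k := by
  obtain ⟨A, c, k, hA, hc, hk, h⟩ := aux_main g hg hsm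
  refine ⟨Matrix.GeneralLinearGroup.mkOfDetNeZero A hA, Units.mk0 c hc, k, hk, ?_⟩
  apply MvPolynomial.funext
  intro v
  have hv := h v
  have e : eval v (aeval (fun i : Fin 3 => ∑ j : Fin 3, A i j • (X j : MvPolynomial (Fin 3) ℂ)) g)
      = eval (A.mulVec v) g := by
    rw [← aeval_eq_eval, ← aeval_eq_eval, ← AlgHom.comp_apply]
    congr 1
    apply MvPolynomial.algHom_ext
    intro i
    simp [Matrix.mulVec, dotProduct]
  refine Eq.trans e (hv.trans ?_)
  simp [hesseCubic]
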